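/- arXiv:2312.08696 — 7 statements merged into one kernel-verified Lean document; each statement's English description precedes it below -/
import Mathlib

section
/- Let u, v, w : ℝ² → ℝ² be continuously differentiable vector fields with compact support. Then b_emac(u,v,w) = b_conv(v,u,w) + b_conv(w,u,v) − b_conv(u,v,w) − b_conv(u,w,v). -/
open MeasureTheory RealInnerProductSpace

noncomputable section

abbrev E2 := EuclideanSpace ℝ (Fin 2)

/-- divergence of a vector field on ℝ² -/
def dvg (u : E2 → E2) (x : E2) : ℝ :=
  ∑ i, fderiv ℝ u x (EuclideanSpace.single i 1) i

/-- convective trilinear form  b_conv(u,v,w) = ∫ ((u·∇)v)·w -/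
def bConv (u v w : E2 → E2) : ℝ :=
  ∫ x, ⟪fderiv ℝ v x (u x), w x⟫

/-- EMAC trilinear form  b_emac(u,v,w) = ∫ (2D(u)v)·w + (∇·u)(v·w),
where (2D(u)v)·w = (∇u v)·w + (∇u w)·v. -/
def bEmac (u v w : E2 → E2) : ℝ :=
  ∫ x, (⟪fderiv ℝ u x (v x), w x⟫ + ⟪fderiv ℝ u x (w x), v x⟫
    + dvg u x * ⟪v x, w x⟫)

/-- L² norm -/
def l2Norm {F : Type*} [NormedAddCommGroup F] (f : E2 → F) : ℝ :=
  (∫ x, ‖f x‖ ^ 2) ^ ((1 : ℝ) / 2)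

/-- H¹ norm -/
def h1Norm (f : E2 → E2) : ℝ := l2Norm f + l2Norm (fderiv ℝ f)

/-- H² norm -/
def h2Norm (f : E2 → E2) : ℝ :=
  l2Norm f + l2Norm (fderiv ℝ f) + l2Norm (fderiv ℝ (fderiv ℝ f))

/-- rotational field φ(x₁,x₂) = (−x₂, x₁) -/
def phi : E2 → E2 := fun x => (WithLp.equiv 2 (Fin 2 → ℝ)).symm ![-x 1, x 0]

theorem emac_aux_int (f : E2 → ℝ) (hf : Continuous f) (hs : HasCompactSupport f) :
    Integrable f := hf.integrable_of_hasCompactSupport hs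

theorem emac_aux_div (u : E2 → E2) (g : E2 → ℝ)
    (hu : ContDiff ℝ 1 u) (hg : ContDiff ℝ 1 g) (hcu : HasCompactSupport u) :
    ∫ x, fderiv ℝ g x (u x) = - ∫ x, dvg u x * g x := by
  have hud := hu.differentiable one_ne_zero
  have hgd := hg.differentiable one_ne_zero
  have hu' := hu.continuous_fderiv one_ne_zero
  have hg' := hg.continuous_fderiv one_ne_zero
  have huc := hu.continuous
  have hgc := hg.continuous
  have hcui : ∀ i : Fin 2, HasCompactSupport (fun x => u x i) := fun i =>
    hcu.comp_left (g := fun y : E2 => y i) rfl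
  have hcu' : ∀ i : Fin 2, HasCompactSupport
      (fun x => fderiv ℝ u x (EuclideanSpace.single i 1) i) := fun i =>
    (hcu.fderiv ℝ).comp_left (g := fun L : E2 →L[ℝ] E2 => L (EuclideanSpace.single i 1) i) rfl
  have hd : ∀ (i : Fin 2) x, fderiv ℝ (fun x => u x i) x (EuclideanSpace.single i 1)
      = fderiv ℝ u x (EuclideanSpace.single i 1) i := by
    intro i x
    have h := ((EuclideanSpace.proj i : E2 →L[ℝ] ℝ).hasFDerivAt.comp x
      (hud x).hasFDerivAt).fderiv
    have h2 : fderiv ℝ (fun x => u x i) x = _ := h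
    rw [h2]
    rfl
  have I1 : ∀ i : Fin 2, Integrable
      (fun x => fderiv ℝ u x (EuclideanSpace.single i 1) i * g x) := fun i =>
    emac_aux_int _ (by fun_prop) (hcu' i).mul_right
  have I2 : ∀ i : Fin 2, Integrable
      (fun x => u x i * fderiv ℝ g x (EuclideanSpace.single i 1)) := fun i =>
    emac_aux_int _ (by fun_prop) (hcui i).mul_right
  have I3 : ∀ i : Fin 2, Integrable (fun x => u x i * g x) := fun i =>
    emac_aux_int _ (by fun_prop) (hcui i).mul_right
  have key : ∀ i : Fin 2, ∫ x, u x i * fderiv ℝ g x (EuclideanSpace.single i 1)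
      = - ∫ x, fderiv ℝ u x (EuclideanSpace.single i 1) i * g x := by
    intro i
    have h := integral_mul_fderiv_eq_neg_fderiv_mul_of_integrable (μ := (volume : Measure E2))
      (f := fun x => u x i) (g := g)
      (v := EuclideanSpace.single i 1) (by simpa only [hd] using I1 i) (I2 i) (I3 i)
      (fun x _ => by fun_prop) (fun x _ => hgd x)
    simpa only [hd] using h
  have e1 : ∀ x, fderiv ℝ g x (u x)
      = ∑ i, u x i * fderiv ℝ g x (EuclideanSpace.single i 1) := by
    intro x
    have : u x = ∑ i, u x i • (EuclideanSpace.single i (1:ℝ) : E2) := by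
      ext j
      fin_cases j <;> simp [Fin.sum_univ_two]
    conv_lhs => rw [this]
    simp only [map_sum, map_smul, smul_eq_mul]
  simp only [e1, dvg, Finset.sum_mul]
  rw [integral_finsetSum _ (fun i _ => I2 i), integral_finsetSum _ (fun i _ => I1 i),
    ← Finset.sum_neg_distrib]
  exact Finset.sum_congr rfl fun i _ => key i

theorem bEmac_eq_bConv_four
    (u v w : E2 → E2)
    (hu : ContDiff ℝ 1 u) (hv : ContDiff ℝ 1 v) (hw : ContDiff ℝ 1 w)
    (hcu : HasCompactSupport u) (hcv : HasCompactSupport v)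
    (hcw : HasCompactSupport w) :
    bEmac u v w = bConv v u w + bConv w u v - bConv u v w - bConv u w v := by
  have hvd := hv.differentiable one_ne_zero
  have hwd := hw.differentiable one_ne_zero
  have hu' := hu.continuous_fderiv one_ne_zero
  have hv' := hv.continuous_fderiv one_ne_zero
  have hw' := hw.continuous_fderiv one_ne_zero
  have huc := hu.continuous
  have hvc := hv.continuous
  have hwc := hw.continuous
  have J : ∀ a b c : E2 → E2, ContDiff ℝ 1 b → Continuous a → Continuous c →
      HasCompactSupport c → Integrable (fun x => ⟪fderiv ℝ b x (a x), c x⟫) := by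
    intro a b c hb ha hc hcc
    have hb' := hb.continuous_fderiv one_ne_zero
    refine emac_aux_int _ (by fun_prop) (hcc.mono ?_)
    intro x hx h0
    apply hx
    simp [h0]
  have Jd : Integrable (fun x => dvg u x * ⟪v x, w x⟫) := by
    refine emac_aux_int _ (by unfold dvg; fun_prop) (hcw.mono ?_)
    intro x hx h0
    apply hx
    simp [h0]
  have h := emac_aux_div u (fun x => ⟪v x, w x⟫) hu (hv.inner ℝ hw) hcu
  have e : ∀ x, fderiv ℝ (fun x => ⟪v x, w x⟫) x (u x)
      = ⟪fderiv ℝ v x (u x), w x⟫ + ⟪fderiv ℝ w x (u x), v x⟫ := by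
    intro x
    rw [fderiv_inner_apply ℝ (hvd x) (hwd x), real_inner_comm (v x), add_comm]
  simp only [e] at h
  rw [integral_add (J u v w hv huc hwc hcw) (J u w v hw huc hvc hcv)] at h
  unfold bEmac bConv
  have Js : Integrable (fun x => ⟪fderiv ℝ u x (v x), w x⟫ + ⟪fderiv ℝ u x (w x), v x⟫) :=
    (J v u w hu hvc hwc hcw).add (J w u v hu hwc hvc hcv)
  rw [integral_add Js Jd,
    integral_add (J v u w hu hvc hwc hcw) (J w u v hu hwc hvc hcv)]
  linarith
end
end

section
/- Let u : ℝ² → ℝ² be a continuously differentiable vector field with compact support. Then b_emac(u,u,u) = 0; that is, ∫_{ℝ²} (2D(u)u)·u + (∇·u)|u|² dx = 0. -/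
open MeasureTheory RealInnerProductSpace

noncomputable section

theorem bEmac_self_eq_zero
    (u : E2 → E2) (hu : ContDiff ℝ 1 u) (hcu : HasCompactSupport u) :
    bEmac u u u = 0 := by
  have hd : Differentiable ℝ u := hu.differentiable one_ne_zero
  have hc : Continuous u := hu.continuous
  have hg : ContDiff ℝ 1 (fun x => ⟪u x, u x⟫) := hu.inner ℝ hu
  have hgD : ∀ x w, fderiv ℝ (fun x => ⟪u x, u x⟫) x w
      = ⟪u x, fderiv ℝ u x w⟫ + ⟪fderiv ℝ u x w, u x⟫ := fun x w =>
    fderiv_inner_apply ℝ (hd x) (hd x) w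
  have hf : ∀ i : Fin 2, ContDiff ℝ 1 (fun x => u x i) := fun i =>
    (EuclideanSpace.proj i : E2 →L[ℝ] ℝ).contDiff.comp hu
  have hfD : ∀ (i : Fin 2) x w, fderiv ℝ (fun x => u x i) x w = fderiv ℝ u x w i := by
    intro i x w
    have h := ((EuclideanSpace.proj i : E2 →L[ℝ] ℝ).hasFDerivAt.comp x
      (hd x).hasFDerivAt).fderiv
    exact congrArg (fun L => L w) h
  have hz : ∀ x, x ∉ tsupport u → u x = 0 := fun x hx => image_eq_zero_of_notMem_tsupport hx
  have I1 : ∀ i : Fin 2, Integrable (fun x => fderiv ℝ (fun x => u x i) x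
      (EuclideanSpace.single i 1) * ⟪u x, u x⟫) := fun i =>
    ((((hf i).continuous_fderiv one_ne_zero).clm_apply continuous_const).mul
      hg.continuous).integrable_of_hasCompactSupport
      (HasCompactSupport.intro hcu fun x hx => by simp [hz x hx])
  have I2 : ∀ i : Fin 2, Integrable (fun x => u x i * fderiv ℝ (fun x => ⟪u x, u x⟫) x
      (EuclideanSpace.single i 1)) := fun i =>
    ((hf i).continuous.mul ((hg.continuous_fderiv one_ne_zero).clm_apply
      continuous_const)).integrable_of_hasCompactSupport
      (HasCompactSupport.intro hcu fun x hx => by simp [hz x hx])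
  have I3 : ∀ i : Fin 2, Integrable (fun x => u x i * ⟪u x, u x⟫) := fun i =>
    ((hf i).continuous.mul hg.continuous).integrable_of_hasCompactSupport
      (HasCompactSupport.intro hcu fun x hx => by simp [hz x hx])
  have key : ∀ i : Fin 2, ∫ x, (u x i * fderiv ℝ (fun x => ⟪u x, u x⟫) x
      (EuclideanSpace.single i 1) + fderiv ℝ (fun x => u x i) x
      (EuclideanSpace.single i 1) * ⟪u x, u x⟫) = 0 := by
    intro i
    rw [integral_add (I2 i) (I1 i),
      integral_mul_fderiv_eq_neg_fderiv_mul_of_integrable (I1 i) (I2 i) (I3 i)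
        (fun x _ => (hf i).differentiable one_ne_zero x)
        (fun x _ => hg.differentiable one_ne_zero x)]
    simp
  have hsum : bEmac u u u = ∫ x, ∑ i : Fin 2, (u x i * fderiv ℝ (fun x => ⟪u x, u x⟫) x
      (EuclideanSpace.single i 1) + fderiv ℝ (fun x => u x i) x
      (EuclideanSpace.single i 1) * ⟪u x, u x⟫) := by
    unfold bEmac dvg
    congr 1
    ext x
    have hux : u x = ∑ i : Fin 2, u x i • (EuclideanSpace.single i 1 : E2) := by
      ext j
      fin_cases j <;> simp
    have h1 : ⟪fderiv ℝ u x (u x), u x⟫ + ⟪fderiv ℝ u x (u x), u x⟫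
        = ∑ i : Fin 2, u x i * fderiv ℝ (fun x => ⟪u x, u x⟫) x
          (EuclideanSpace.single i 1) := by
      calc _ = fderiv ℝ (fun x => ⟪u x, u x⟫) x (u x) := by
            rw [hgD, real_inner_comm (u x)]
        _ = fderiv ℝ (fun x => ⟪u x, u x⟫) x
            (∑ i : Fin 2, u x i • (EuclideanSpace.single i 1 : E2)) := by rw [← hux]
        _ = _ := by simp only [map_sum, map_smul, smul_eq_mul]
    rw [h1, Finset.sum_add_distrib, Finset.sum_mul]
    simp only [hfD]
  rw [hsum]
  refine (integral_finsetSum _ (fun i _ => (I2 i).add (I1 i))).trans ?_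
  exact Finset.sum_eq_zero fun i _ => key i
end
end

section
/- Let u : ℝ² → ℝ² be a continuously differentiable vector field with compact support, and let c ∈ ℝ² be a constant vector. Then b_emac(u,u,c) = 0; that is, ∫_{ℝ²} (2D(u)u)·c + (∇·u)(u·c) dx = 0. -/
open MeasureTheory RealInnerProductSpace

noncomputable section

theorem aux_int (h : E2 → ℝ) (hh : ContDiff ℝ 1 h) (hc : HasCompactSupport h) (v : E2) :
    Integrable (fun x => fderiv ℝ h x v) ∧ ∫ x, fderiv ℝ h x v = 0 := by
  have hi : Integrable (fun x => fderiv ℝ h x v) := by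
    apply Continuous.integrable_of_hasCompactSupport
    · exact (hh.continuous_fderiv one_ne_zero).clm_apply continuous_const
    · exact hc.fderiv_apply ℝ v
  refine ⟨hi, ?_⟩
  have := integral_mul_fderiv_eq_neg_fderiv_mul_of_integrable (μ := (volume : Measure E2))
    (f := fun _ : E2 => (1 : ℝ)) (g := h) (v := v) (by simp) (by simpa using hi)
    (by simpa using hh.continuous.integrable_of_hasCompactSupport hc)
    (fun x _ => by fun_prop) (fun x _ => hh.differentiable one_ne_zero x)
  simpa using this

theorem bEmac_const_eq_zero
    (u : E2 → E2) (hu : ContDiff ℝ 1 u) (hcu : HasCompactSupport u)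
    (c : E2) :
    bEmac u u (fun _ => c) = 0 := by
  have hd : Differentiable ℝ u := hu.differentiable one_ne_zero
  have hp : ∀ i, ContDiff ℝ 1 (fun x => u x i) := fun i => by fun_prop
  have hq : ContDiff ℝ 1 (fun x => ⟪u x, c⟫) := hu.inner ℝ contDiff_const
  have hs : ContDiff ℝ 1 (fun x => ⟪u x, u x⟫) := hu.inner ℝ hu
  have hcq : HasCompactSupport (fun x => ⟪u x, c⟫) :=
    hcu.comp_left (g := fun y : E2 => ⟪y, c⟫) (by simp)
  have hcs : HasCompactSupport (fun x => ⟪u x, u x⟫) :=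
    hcu.comp_left (g := fun y : E2 => ⟪y, y⟫) (by simp)
  have A : ∀ i : Fin 2, _ := fun i => aux_int (fun x => u x i * ⟪u x, c⟫) ((hp i).mul hq)
    hcq.mul_left (EuclideanSpace.single i 1)
  have B := aux_int _ hs hcs c
  have key : ∀ x, (⟪fderiv ℝ u x (u x), c⟫ + ⟪fderiv ℝ u x c, u x⟫ + dvg u x * ⟪u x, c⟫)
      = fderiv ℝ (fun x => u x 0 * ⟪u x, c⟫) x (EuclideanSpace.single 0 1)
      + fderiv ℝ (fun x => u x 1 * ⟪u x, c⟫) x (EuclideanSpace.single 1 1)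
      + (1 / 2) * fderiv ℝ (fun x => ⟪u x, u x⟫) x c := by
    intro x
    have e1 : ∀ i v, fderiv ℝ (fun x => u x i) x v = fderiv ℝ u x v i := by
      intro i v
      have := ((EuclideanSpace.proj i : E2 →L[ℝ] ℝ).hasFDerivAt.comp x
        (hd x).hasFDerivAt).fderiv
      exact congrArg (fun L => L v) this
    have e2 : ∀ i v, fderiv ℝ (fun x => u x i * ⟪u x, c⟫) x v
        = u x i * ⟪fderiv ℝ u x v, c⟫ + ⟪u x, c⟫ * fderiv ℝ u x v i := by
      intro i v
      rw [fderiv_fun_mul ((hp i).differentiable one_ne_zero x) (hq.differentiable one_ne_zero x)]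
      simp only [_root_.add_apply, _root_.smul_apply, smul_eq_mul, e1]
      rw [fderiv_inner_apply ℝ (hd x) (differentiableAt_const c)]
      simp
    have e3 : u x = u x 0 • EuclideanSpace.single 0 1 + u x 1 • EuclideanSpace.single 1 1 := by
      ext i; fin_cases i <;> simp
    have e4 : fderiv ℝ u x (u x) = u x 0 • fderiv ℝ u x (EuclideanSpace.single 0 1)
        + u x 1 • fderiv ℝ u x (EuclideanSpace.single 1 1) := by
      conv_lhs => rw [e3]
      rw [map_add, map_smul, map_smul]
    rw [e2, e2, fderiv_inner_apply ℝ (hd x) (hd x), e4, inner_add_left, real_inner_smul_left,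
      real_inner_smul_left, real_inner_comm (u x) (fderiv ℝ u x c), dvg, Fin.sum_univ_two]
    ring
  unfold bEmac
  simp only [key]
  rw [integral_add (by exact (A 0).1.add (A 1).1) (B.1.const_mul _), integral_add (A 0).1 (A 1).1,
    integral_const_mul, (A 0).2, (A 1).2, B.2]
  simp
end
end

section
/- Let u : ℝ² → ℝ² be a continuously differentiable vector field with compact support, and let φ : ℝ² → ℝ² be the rotational field φ(x₁,x₂) = (−x₂, x₁). Then b_emac(u,u,φ) = 0; that is, ∫_{ℝ²} (2D(u)u)·φ + (∇·u)(u·φ) dx = 0. -/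
open MeasureTheory RealInnerProductSpace

noncomputable section

theorem int_fderiv_zero (g : E2 → ℝ) (hg : ContDiff ℝ 1 g) (hc : HasCompactSupport g) (v : E2) :
    Integrable (fun x => fderiv ℝ g x v) ∧ ∫ x, fderiv ℝ g x v = 0 := by
  have h1 : Integrable (fun x => fderiv ℝ g x v) := by
    apply Continuous.integrable_of_hasCompactSupport
    · exact (hg.continuous_fderiv (by norm_num)).clm_apply continuous_const
    · exact hc.fderiv_apply ℝ v
  refine ⟨h1, ?_⟩
  have h2 : Integrable g := hg.continuous.integrable_of_hasCompactSupport hc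
  have := integral_mul_fderiv_eq_neg_fderiv_mul_of_integrable (𝕜 := ℝ) (μ := (volume : Measure E2))
    (f := fun _ => (1:ℝ)) (g := g) (v := v) (by simp) (by simpa using h1) (by simpa using h2)
    (fun x _ => by fun_prop) (fun x _ => hg.differentiable (by norm_num) x)
  simpa using this

theorem bEmac_rot_eq_zero
    (u : E2 → E2) (hu : ContDiff ℝ 1 u) (hcu : HasCompactSupport u) :
    bEmac u u phi = 0 := by
  have hc : ∀ i : Fin 2, ContDiff ℝ 1 (fun x => u x i) := fun i => by fun_prop
  have hx : ∀ i : Fin 2, ContDiff ℝ 1 (fun x : E2 => x i) := fun i => by fun_prop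
  have h0 := hc 0
  have h1 := hc 1
  have x0 := hx 0
  have x1 := hx 1
  let F : E2 → ℝ := fun x => u x 0 * (u x 1 * x 0 - u x 0 * x 1)
    - x 1 * ((u x 0 * u x 0 + u x 1 * u x 1) * (1/2))
  let G : E2 → ℝ := fun x => u x 1 * (u x 1 * x 0 - u x 0 * x 1)
    + x 0 * ((u x 0 * u x 0 + u x 1 * u x 1) * (1/2))
  have hF : ContDiff ℝ 1 F :=
    (h0.mul ((h1.mul x0).sub (h0.mul x1))).sub
      (x1.mul (((h0.mul h0).add (h1.mul h1)).mul contDiff_const))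
  have hG : ContDiff ℝ 1 G :=
    (h1.mul ((h1.mul x0).sub (h0.mul x1))).add
      (x0.mul (((h0.mul h0).add (h1.mul h1)).mul contDiff_const))
  have cF : HasCompactSupport F := hcu.mono (by
    intro x hx h
    apply hx
    have h : u x = 0 := by simpa using h
    simp [F, h])
  have cG : HasCompactSupport G := hcu.mono (by
    intro x hx h
    apply hx
    have h : u x = 0 := by simpa using h
    simp [G, h])
  obtain ⟨iF, zF⟩ := int_fderiv_zero F hF cF (EuclideanSpace.single 0 1)
  obtain ⟨iG, zG⟩ := int_fderiv_zero G hG cG (EuclideanSpace.single 1 1)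
  have key : bEmac u u phi = ∫ x, (fderiv ℝ F x (EuclideanSpace.single 0 1)
      + fderiv ℝ G x (EuclideanSpace.single 1 1)) := by
    unfold bEmac
    congr 1
    funext x
    have du : HasFDerivAt u (fderiv ℝ u x) x :=
      (hu.differentiable (by norm_num) x).hasFDerivAt
    have da : ∀ i : Fin 2, HasFDerivAt (fun y => u y i)
        ((EuclideanSpace.proj i : E2 →L[ℝ] ℝ).comp (fderiv ℝ u x)) x := fun i =>
      (EuclideanSpace.proj i : E2 →L[ℝ] ℝ).hasFDerivAt.comp x du
    have dx : ∀ i : Fin 2, HasFDerivAt (fun y : E2 => y i)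
        (EuclideanSpace.proj i : E2 →L[ℝ] ℝ) x := fun i =>
      (EuclideanSpace.proj i : E2 →L[ℝ] ℝ).hasFDerivAt
    have dF : HasFDerivAt F _ x :=
      ((da 0).mul (((da 1).mul (dx 0)).sub ((da 0).mul (dx 1)))).sub
      ((dx 1).mul ((((da 0).mul (da 0)).add ((da 1).mul (da 1))).mul (hasFDerivAt_const (1/2:ℝ) x)))
    have dG : HasFDerivAt G _ x :=
      ((da 1).mul (((da 1).mul (dx 0)).sub ((da 0).mul (dx 1)))).add
      ((dx 0).mul ((((da 0).mul (da 0)).add ((da 1).mul (da 1))).mul (hasFDerivAt_const (1/2:ℝ) x)))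
    have dec : ∀ v : E2, fderiv ℝ u x v = v 0 • fderiv ℝ u x (EuclideanSpace.single 0 1)
        + v 1 • fderiv ℝ u x (EuclideanSpace.single 1 1) := by
      intro v
      rw [← map_smul, ← map_smul, ← map_add]
      congr 1
      ext i
      fin_cases i <;> simp
    rw [dF.fderiv, dG.fderiv, dec (u x), dec (phi x)]
    simp [dvg, phi, PiLp.inner_apply, Fin.sum_univ_two]
    ring
  rw [key, integral_add iF iG, zF, zG, add_zero]
end
end

section
/- Let a, b : ℝ² → ℝ² be continuously differentiable vector fields with compact support, and let φ : ℝ² → ℝ² be the rotational field φ(x₁,x₂) = (−x₂, x₁). Then the Newton-linearized EMAC trilinear term vanishes: b_emac(a,b,φ) + b_emac(b,a,φ) − b_emac(a,a,φ) = 0. -/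
open MeasureTheory RealInnerProductSpace

noncomputable section

theorem int_dir_zero (F : E2 → ℝ) (hF : ContDiff ℝ 1 F) (hc : HasCompactSupport F) (w : E2) :
    ∫ x, fderiv ℝ F x w = 0 := by
  have hi : Integrable (fun x => fderiv ℝ F x w) :=
    ((hF.continuous_fderiv one_ne_zero).clm_apply continuous_const).integrable_of_hasCompactSupport
      (hc.fderiv_apply ℝ w)
  have h := integral_mul_fderiv_eq_neg_fderiv_mul_of_integrable (μ := (volume : Measure E2))
    (f := fun _ : E2 => (1 : ℝ)) (g := F) (v := w) (by simp) (by simpa using hi)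
    (by simpa using hF.continuous.integrable_of_hasCompactSupport hc)
    (fun x _ => by fun_prop) (fun x _ => hF.differentiable one_ne_zero x)
  simpa using h

theorem phi_zero (x : E2) : phi x 0 = -x 1 := by simp [phi]
theorem phi_one (x : E2) : phi x 1 = x 0 := by simp [phi]

theorem cont_phi : ContDiff ℝ 1 phi := by
  rw [contDiff_euclidean]
  intro i
  fin_cases i
  · simp only [Fin.zero_eta, phi_zero]; fun_prop
  · simp only [Fin.mk_one, phi_one]; fun_prop

theorem emac_integrable (u v : E2 → E2) (hu : ContDiff ℝ 1 u) (hv : ContDiff ℝ 1 v)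
    (hcv : HasCompactSupport v) :
    Integrable (fun x => ⟪fderiv ℝ u x (v x), phi x⟫ + ⟪fderiv ℝ u x (phi x), v x⟫
    + dvg u x * ⟪v x, phi x⟫) := by
  have h1 := hu.continuous_fderiv one_ne_zero
  have h2 := hv.continuous
  have h3 := cont_phi.continuous
  apply Continuous.integrable_of_hasCompactSupport
  · unfold dvg
    fun_prop
  · apply hcv.mono
    intro x hx hv
    apply hx
    simp [hv]

theorem clm_coord (A : E2 →L[ℝ] E2) (w : E2) (i : Fin 2) :
    A w i = w 0 * A (EuclideanSpace.single 0 1) i + w 1 * A (EuclideanSpace.single 1 1) i := by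
  have : w = w 0 • EuclideanSpace.single 0 (1:ℝ) + w 1 • EuclideanSpace.single 1 (1:ℝ) := by
    ext j; fin_cases j <;> simp
  conv_lhs => rw [this]
  simp

theorem emac_symm (u v : E2 → E2) (hu : ContDiff ℝ 1 u) (hv : ContDiff ℝ 1 v)
    (hcu : HasCompactSupport u) (hcv : HasCompactSupport v) :
    bEmac u v phi + bEmac v u phi = 0 := by
  let F : Fin 2 → E2 → ℝ := fun i x =>
    v x i * (-x 1 * u x 0 + x 0 * u x 1) + u x i * (-x 1 * v x 0 + x 0 * v x 1)
      + phi x i * (u x 0 * v x 0 + u x 1 * v x 1)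
  have hu' : ∀ i, ContDiff ℝ 1 (fun x => u x i) := contDiff_euclidean.1 hu
  have hv' : ∀ i, ContDiff ℝ 1 (fun x => v x i) := contDiff_euclidean.1 hv
  have hp' : ∀ i, ContDiff ℝ 1 (fun x => phi x i) := contDiff_euclidean.1 cont_phi
  have hF : ∀ i, ContDiff ℝ 1 (F i) := by
    intro i
    have := hu' 0
    have := hu' 1
    have := hv' 0
    have := hv' 1
    have := hu' i
    have := hv' i
    have := hp' i
    simp only [F]
    fun_prop
  have hc : ∀ i, HasCompactSupport (F i) := by
    intro i
    apply hcv.mono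
    intro x hx hv
    apply hx
    simp [F, hv]
  have hi : ∀ i w, Integrable (fun x => fderiv ℝ (F i) x w) := fun i w =>
    (((hF i).continuous_fderiv one_ne_zero).clm_apply
      continuous_const).integrable_of_hasCompactSupport ((hc i).fderiv_apply ℝ w)
  have key := int_dir_zero (F 0) (hF 0) (hc 0) (EuclideanSpace.single 0 1)
  have key1 := int_dir_zero (F 1) (hF 1) (hc 1) (EuclideanSpace.single 1 1)
  have hsum := integral_add (hi 0 (EuclideanSpace.single 0 1)) (hi 1 (EuclideanSpace.single 1 1))
  rw [key, key1, add_zero] at hsum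
  unfold bEmac
  rw [← integral_add (emac_integrable u v hu hv hcv) (emac_integrable v u hv hu hcu), ← hsum]
  congr 1
  ext x
  have du : ∀ i, HasFDerivAt (fun x => u x i) ((EuclideanSpace.proj i).comp (fderiv ℝ u x)) x :=
    fun i => (EuclideanSpace.proj i : E2 →L[ℝ] ℝ).hasFDerivAt.comp x
      (hu.differentiable one_ne_zero x).hasFDerivAt
  have dv : ∀ i, HasFDerivAt (fun x => v x i) ((EuclideanSpace.proj i).comp (fderiv ℝ v x)) x :=
    fun i => (EuclideanSpace.proj i : E2 →L[ℝ] ℝ).hasFDerivAt.comp x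
      (hv.differentiable one_ne_zero x).hasFDerivAt
  have dx : ∀ i, HasFDerivAt (fun x : E2 => x i) (EuclideanSpace.proj i : E2 →L[ℝ] ℝ) x :=
    fun i => (EuclideanSpace.proj i : E2 →L[ℝ] ℝ).hasFDerivAt
  have P := ((dx 1).neg.mul (du 0)).add ((dx 0).mul (du 1))
  have Q := ((dx 1).neg.mul (dv 0)).add ((dx 0).mul (dv 1))
  have R := ((du 0).mul (dv 0)).add ((du 1).mul (dv 1))
  have e0 : F 0 = fun x => v x 0 * (-x 1 * u x 0 + x 0 * u x 1)
      + u x 0 * (-x 1 * v x 0 + x 0 * v x 1) + -x 1 * (u x 0 * v x 0 + u x 1 * v x 1) := by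
    ext x; simp only [F, phi_zero]
  have e1 : F 1 = fun x => v x 1 * (-x 1 * u x 0 + x 0 * u x 1)
      + u x 1 * (-x 1 * v x 0 + x 0 * v x 1) + x 0 * (u x 0 * v x 0 + u x 1 * v x 1) := by
    ext x; simp only [F, phi_one]
  have d0 := ((((dv 0).mul P).add ((du 0).mul Q)).add ((dx 1).neg.mul R)).fderiv
  have d1 := ((((dv 1).mul P).add ((du 1).mul Q)).add ((dx 0).mul R)).fderiv
  rw [e0, e1]
  refine Eq.trans ?_ (congrArg₂ (fun s t : ℝ => s + t)
    (DFunLike.congr_fun d0 (EuclideanSpace.single 0 1))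
    (DFunLike.congr_fun d1 (EuclideanSpace.single 1 1))).symm
  simp only [PiLp.inner_apply, Fin.sum_univ_two, dvg, clm_coord _ (u x), clm_coord _ (v x),
    clm_coord _ (phi x), phi_zero, phi_one]
  simp
  ring

theorem newton_emac_rot_eq_zero
    (a b : E2 → E2)
    (ha : ContDiff ℝ 1 a) (hb : ContDiff ℝ 1 b)
    (hca : HasCompactSupport a) (hcb : HasCompactSupport b) :
    bEmac a b phi + bEmac b a phi - bEmac a a phi = 0 := by
  have h1 := emac_symm a b ha hb hca hcb
  have h2 := emac_symm a a ha ha hca hca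
  linarith
end
end

section
/- Let a, b : ℝ² → ℝ² be continuously differentiable vector fields with compact support. Then the Newton-linearized EMAC trilinear term tested with b satisfies b_emac(a,b,b) + b_emac(b,a,b) − b_emac(a,a,b) = −b_emac(b−a, b−a, b). -/
open MeasureTheory RealInnerProductSpace

noncomputable section

theorem aux_cont_fderiv {u : E2 → E2} (hu : ContDiff ℝ 1 u) : Continuous (fderiv ℝ u) :=
  hu.continuous_fderiv (by norm_num)

theorem aux_integrable {u v w : E2 → E2} (hu : ContDiff ℝ 1 u) (hv : Continuous v)
    (hw : Continuous w) (hcw : HasCompactSupport w) :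
    Integrable (fun x => ⟪fderiv ℝ u x (v x), w x⟫ + ⟪fderiv ℝ u x (w x), v x⟫
    + dvg u x * ⟪v x, w x⟫) := by
  have h := aux_cont_fderiv hu
  apply Continuous.integrable_of_hasCompactSupport
  · unfold dvg
    fun_prop
  · refine hcw.mono' ?_
    intro x hx
    apply subset_tsupport
    intro h0
    apply hx
    simp [h0]

theorem aux_parts {b : E2 → E2} (hb : ContDiff ℝ 1 b) (hcb : HasCompactSupport b) (i : Fin 2) :
    Integrable (fun x => 2 * ⟪fderiv ℝ b x (EuclideanSpace.single i 1), b x⟫ * b x i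
      + ⟪b x, b x⟫ * fderiv ℝ b x (EuclideanSpace.single i 1) i) ∧
    ∫ x, (2 * ⟪fderiv ℝ b x (EuclideanSpace.single i 1), b x⟫ * b x i
      + ⟪b x, b x⟫ * fderiv ℝ b x (EuclideanSpace.single i 1) i) = 0 := by
  have h := aux_cont_fderiv hb
  have hbc := hb.continuous
  have hd : Differentiable ℝ b := hb.differentiable (by norm_num)
  have key : ∀ F : E2 → ℝ, Continuous F → (∀ x, b x = 0 → F x = 0) → Integrable F := by
    intro F hF h0
    apply hF.integrable_of_hasCompactSupport
    refine hcb.mono' ?_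
    intro x hx
    apply subset_tsupport
    intro hx0
    exact hx (h0 x hx0)
  have i1 : Integrable (fun x => 2 * ⟪fderiv ℝ b x (EuclideanSpace.single i 1), b x⟫ * b x i) :=
    key _ (by fun_prop) (by intro x hx; simp [hx])
  have i2 : Integrable (fun x => ⟪b x, b x⟫ * fderiv ℝ b x (EuclideanSpace.single i 1) i) :=
    key _ (by fun_prop) (by intro x hx; simp [hx])
  have i3 : Integrable (fun x => ⟪b x, b x⟫ * b x i) :=
    key _ (by fun_prop) (by intro x hx; simp [hx])
  have e1 : ∀ x, fderiv ℝ (fun y => ⟪b y, b y⟫) x (EuclideanSpace.single i 1)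
      = 2 * ⟪fderiv ℝ b x (EuclideanSpace.single i 1), b x⟫ := by
    intro x
    rw [fderiv_inner_apply ℝ (hd x) (hd x), real_inner_comm]
    ring
  have e2 : ∀ x, fderiv ℝ (fun y => b y i) x (EuclideanSpace.single i 1)
      = fderiv ℝ b x (EuclideanSpace.single i 1) i := by
    intro x
    have := ((EuclideanSpace.proj i : E2 →L[ℝ] ℝ).hasFDerivAt.comp x
      (hd x).hasFDerivAt).fderiv
    have h2 : fderiv ℝ (fun y => b y i) x = _ := this
    rw [h2]
    rfl
  refine ⟨i1.add i2, ?_⟩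
  rw [integral_add i1 i2]
  have := integral_mul_fderiv_eq_neg_fderiv_mul_of_integrable (μ := (volume : Measure E2))
    (f := fun y => ⟪b y, b y⟫) (g := fun y => b y i) (v := EuclideanSpace.single i 1)
    (by simpa only [e1] using i1) (by simpa only [e2] using i2) i3
    (fun x _ => (hd x).inner ℝ (hd x)) (fun x _ => by have := hd x; fun_prop)
  simp only [e1, e2] at this
  rw [this]
  ring

theorem aux_zero {b : E2 → E2} (hb : ContDiff ℝ 1 b) (hcb : HasCompactSupport b) :
    bEmac b b b = 0 := by
  obtain ⟨j0, z0⟩ := aux_parts hb hcb 0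
  obtain ⟨j1, z1⟩ := aux_parts hb hcb 1
  have hs := integral_add j0 j1
  rw [z0, z1, add_zero] at hs
  rw [← hs]
  unfold bEmac
  congr 1
  funext x
  have hx : b x = b x 0 • EuclideanSpace.single 0 1 + b x 1 • EuclideanSpace.single 1 1 := by
    ext k; fin_cases k <;> simp
  have hL : fderiv ℝ b x (b x) = b x 0 • fderiv ℝ b x (EuclideanSpace.single 0 1)
      + b x 1 • fderiv ℝ b x (EuclideanSpace.single 1 1) := by
    rw [← map_smul, ← map_smul, ← map_add, ← hx]
  rw [hL]
  simp only [dvg, Fin.sum_univ_two, inner_add_left, real_inner_smul_left]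
  ring

theorem newton_emac_energy_identity
    (a b : E2 → E2)
    (ha : ContDiff ℝ 1 a) (hb : ContDiff ℝ 1 b)
    (hca : HasCompactSupport a) (hcb : HasCompactSupport b) :
    bEmac a b b + bEmac b a b - bEmac a a b
      = -bEmac (fun x => b x - a x) (fun x => b x - a x) b := by
  have hda : Differentiable ℝ a := ha.differentiable (by norm_num)
  have hdb : Differentiable ℝ b := hb.differentiable (by norm_num)
  have k1 := aux_integrable ha hb.continuous hb.continuous hcb
  have k2 := aux_integrable hb ha.continuous hb.continuous hcb
  have k3 := aux_integrable ha ha.continuous hb.continuous hcb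
  have k4 := aux_integrable hb hb.continuous hb.continuous hcb
  have hz := aux_zero hb hcb
  have main : bEmac (fun x => b x - a x) (fun x => b x - a x) b
      = bEmac b b b - (bEmac a b b + bEmac b a b - bEmac a a b) := by
    unfold bEmac
    rw [← integral_add' k1 k2, ← integral_sub' (k1.add k2) k3,
      ← integral_sub' k4 ((k1.add k2).sub k3)]
    congr 1
    funext x
    have hf : fderiv ℝ (fun x => b x - a x) x = fderiv ℝ b x - fderiv ℝ a x :=
      fderiv_fun_sub (hdb x) (hda x)
    simp only [dvg, hf, Fin.sum_univ_two, ContinuousLinearMap.sub_apply, map_sub,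
      inner_sub_left, inner_sub_right, PiLp.sub_apply, Pi.add_apply, Pi.sub_apply]
    ring
  rw [main, hz]
  ring
end
end

section
/- There exists a constant C > 0 such that for all continuously differentiable, compactly supported vector fields u, w : ℝ² → ℝ², |b_emac(u,u,w)| ≤ C ‖u‖_{H¹}² ‖u − w‖_{H¹}. -/
open MeasureTheory RealInnerProductSpace

noncomputable section

theorem aux_cs {f g : E2 → ℝ} (hf : Continuous f) (hg : Continuous g)
    (hfc : HasCompactSupport f) (hgc : HasCompactSupport g) (hf0 : ∀ x, 0 ≤ f x)
    (hg0 : ∀ x, 0 ≤ g x) :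
    ∫ x, f x * g x ≤ √(∫ x, f x ^ 2) * √(∫ x, g x ^ 2) := by
  have h := integral_mul_le_Lp_mul_Lq_of_nonneg (μ := (volume : Measure E2)) (p := 2) (q := 2)
    Real.HolderConjugate.two_two (f := f) (g := g)
    (Filter.Eventually.of_forall hf0) (Filter.Eventually.of_forall hg0)
    (hf.memLp_of_hasCompactSupport hfc) (hg.memLp_of_hasCompactSupport hgc)
  simpa [Real.sqrt_eq_rpow] using h

theorem aux_l2 {F : Type*} [NormedAddCommGroup F] (f : E2 → F) :
    l2Norm f = √(∫ x, ‖f x‖ ^ 2) := by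
  rw [l2Norm, Real.sqrt_eq_rpow]

theorem aux_l2_nonneg {F : Type*} [NormedAddCommGroup F] (f : E2 → F) : 0 ≤ l2Norm f := by
  rw [aux_l2]; positivity

theorem aux_fderiv_sq {f : E2 → E2} (hf : ContDiff ℝ 1 f) (x v : E2) :
    fderiv ℝ (fun y => ‖f y‖ ^ 2) x v = 2 * ⟪f x, fderiv ℝ f x v⟫ := by
  have h := ((hf.differentiable one_ne_zero x).hasFDerivAt.norm_sq).fderiv
  have h' : fderiv ℝ (fun y => ‖f y‖ ^ 2) x = 2 • (innerSL ℝ (f x)).comp (fderiv ℝ f x) := h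
  rw [h']
  simp

theorem aux_lady : ∃ K : ℝ, 0 < K ∧ ∀ f : E2 → E2, ContDiff ℝ 1 f → HasCompactSupport f →
    √(∫ x, (‖f x‖ ^ 2) ^ 2) ≤ K * h1Norm f ^ 2 := by
  set c : ℝ := (lintegralPowLePowLIntegralFDerivConst (volume : Measure E2) 2 : ℝ) with hc
  have hc0 : 0 ≤ c := NNReal.coe_nonneg _
  refine ⟨2 * √c + 1, by positivity, fun f hf hfc => ?_⟩
  have hg : ContDiff ℝ 1 (fun x => ‖f x‖ ^ 2) := hf.norm_sq ℝ
  have hgc : HasCompactSupport (fun x => ‖f x‖ ^ 2) := by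
    exact hfc.comp_left (g := fun y : E2 => ‖y‖ ^ 2) (by simp)
  have hD : Continuous (fderiv ℝ f) := hf.continuous_fderiv one_ne_zero
  have hDc : HasCompactSupport (fderiv ℝ f) := hfc.fderiv ℝ
  have hgD : Continuous (fderiv ℝ (fun x => ‖f x‖ ^ 2)) := hg.continuous_fderiv one_ne_zero
  have hgDc : HasCompactSupport (fderiv ℝ (fun x => ‖f x‖ ^ 2)) := hgc.fderiv ℝ
  have hI := hgD.integrable_of_hasCompactSupport (μ := volume) hgDc
  have key := lintegral_pow_le_pow_lintegral_fderiv (volume : Measure E2) hg hgc (p := 2)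
    (by simpa using Real.HolderConjugate.two_two)
  have h2 : ∫ x, (‖f x‖ ^ 2) ^ 2 ≤ c * (∫ x, ‖fderiv ℝ (fun x => ‖f x‖ ^ 2) x‖) ^ 2 := by
    rw [← ofReal_integral_norm_eq_lintegral_enorm hI] at key
    have hl : ∫⁻ x, ‖‖f x‖ ^ 2‖ₑ ^ (2:ℝ) = ENNReal.ofReal (∫ x, (‖f x‖ ^ 2) ^ 2) := by
      rw [ofReal_integral_eq_lintegral_ofReal]
      · refine lintegral_congr fun x => ?_
        rw [Real.enorm_of_nonneg (by positivity), ENNReal.ofReal_pow (p := ‖f x‖ ^ 2) (by positivity) 2]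
        norm_cast
      · refine Continuous.integrable_of_hasCompactSupport (by have := hg.continuous; fun_prop) ?_
        exact hgc.comp_left (g := fun y : ℝ => y ^ 2) (by simp)
      · exact Filter.Eventually.of_forall fun x => by positivity
    rw [hl] at key
    rw [← ENNReal.ofReal_le_ofReal_iff (by positivity), ENNReal.ofReal_mul hc0,
      ENNReal.ofReal_pow (by positivity), hc, ENNReal.ofReal_coe_nnreal]
    exact_mod_cast key
  have h3 : ∫ x, ‖fderiv ℝ (fun x => ‖f x‖ ^ 2) x‖ ≤ 2 * (l2Norm f * l2Norm (fderiv ℝ f)) := by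
    calc ∫ x, ‖fderiv ℝ (fun x => ‖f x‖ ^ 2) x‖ ≤ ∫ x, 2 * (‖f x‖ * ‖fderiv ℝ f x‖) := by
          refine integral_mono hI.norm ?_ fun x => ?_
          · refine Continuous.integrable_of_hasCompactSupport
              (by have := hf.continuous; fun_prop) ?_
            exact (hfc.norm.mul_right).mul_left
          · refine ContinuousLinearMap.opNorm_le_bound _ (by positivity) fun v => ?_
            rw [aux_fderiv_sq hf, norm_mul]
            have h1 := norm_inner_le_norm (𝕜 := ℝ) (f x) (fderiv ℝ f x v)
            have h2 := (fderiv ℝ f x).le_opNorm v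
            have h3 := mul_le_mul_of_nonneg_left h2 (norm_nonneg (f x))
            simp only [Real.norm_ofNat]
            linarith
      _ = 2 * ∫ x, ‖f x‖ * ‖fderiv ℝ f x‖ := integral_const_mul _ _
      _ ≤ _ := by
          rw [aux_l2, aux_l2]
          have := aux_cs hf.continuous.norm hD.norm hfc.norm hDc.norm
            (fun _ => norm_nonneg _) (fun _ => norm_nonneg _)
          linarith
  have hA := aux_l2_nonneg f
  have hB := aux_l2_nonneg (fderiv ℝ f)
  have hJ : 0 ≤ ∫ x, ‖fderiv ℝ (fun x => ‖f x‖ ^ 2) x‖ := by positivity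
  calc √(∫ x, (‖f x‖ ^ 2) ^ 2) ≤ √(c * (∫ x, ‖fderiv ℝ (fun x => ‖f x‖ ^ 2) x‖) ^ 2) :=
        Real.sqrt_le_sqrt h2
    _ = √c * ∫ x, ‖fderiv ℝ (fun x => ‖f x‖ ^ 2) x‖ := by
        rw [Real.sqrt_mul hc0, Real.sqrt_sq hJ]
    _ ≤ √c * (2 * (l2Norm f * l2Norm (fderiv ℝ f))) := by gcongr
    _ ≤ √c * (2 * h1Norm f ^ 2) := by
        gcongr; rw [h1Norm]; nlinarith
    _ ≤ _ := by nlinarith [sq_nonneg (h1Norm f)]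

theorem aux_dvg_cont {u : E2 → E2} (hu : ContDiff ℝ 1 u) : Continuous (dvg u) := by
  have hD : Continuous (fderiv ℝ u) := hu.continuous_fderiv one_ne_zero
  unfold dvg
  fun_prop

theorem aux_dvg_le (u : E2 → E2) (x : E2) : |dvg u x| ≤ 2 * ‖fderiv ℝ u x‖ := by
  have h : ∀ i : Fin 2, |fderiv ℝ u x (EuclideanSpace.single i 1) i| ≤ ‖fderiv ℝ u x‖ := by
    intro i
    have h1 := PiLp.norm_apply_le (fderiv ℝ u x (EuclideanSpace.single i 1)) i
    have h2 := (fderiv ℝ u x).le_opNorm (EuclideanSpace.single i 1)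
    simp at h1 h2
    linarith
  unfold dvg
  rw [Fin.sum_univ_two]
  have := abs_add_le (fderiv ℝ u x (EuclideanSpace.single 0 1) 0)
    (fderiv ℝ u x (EuclideanSpace.single 1 1) 1)
  linarith [h 0, h 1]

theorem aux_int_s12 {u w : E2 → E2} (hu : ContDiff ℝ 1 u) (hw : Continuous w)
    (huc : HasCompactSupport u) :
    Integrable (fun x => ⟪fderiv ℝ u x (u x), w x⟫ + ⟪fderiv ℝ u x (w x), u x⟫
      + dvg u x * ⟪u x, w x⟫) := by
  have hD : Continuous (fderiv ℝ u) := hu.continuous_fderiv one_ne_zero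
  have := hu.continuous
  have := aux_dvg_cont hu
  refine Continuous.integrable_of_hasCompactSupport (by fun_prop) ?_
  refine huc.mono fun x hx => ?_
  contrapose! hx
  simp at hx
  simp [hx]

theorem aux_zero_s12 {u : E2 → E2} (hu : ContDiff ℝ 1 u) (huc : HasCompactSupport u) :
    bEmac u u u = 0 := by
  have hD : Continuous (fderiv ℝ u) := hu.continuous_fderiv one_ne_zero
  have hc := hu.continuous
  have hg : ContDiff ℝ 1 (fun x => ‖u x‖ ^ 2) := hu.norm_sq ℝ
  have hgD : Continuous (fderiv ℝ (fun x => ‖u x‖ ^ 2)) := hg.continuous_fderiv one_ne_zero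
  have hui : ∀ i, ContDiff ℝ 1 (fun x => u x i) := fun i => by fun_prop
  have hfi : ∀ i x v, fderiv ℝ (fun x => u x i) x v = fderiv ℝ u x v i := by
    intro i x v
    have h := ((EuclideanSpace.proj (𝕜 := ℝ) i).hasFDerivAt.comp x
      (hu.differentiable one_ne_zero x).hasFDerivAt).fderiv
    have h' : fderiv ℝ (fun x => u x i) x = (EuclideanSpace.proj (𝕜 := ℝ) i).comp (fderiv ℝ u x) := h
    rw [h']; rfl
  have hI1 : ∀ i, Integrable (fun x => fderiv ℝ (fun y => ‖u y‖ ^ 2) x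
      (EuclideanSpace.single i 1) * u x i) := by
    intro i
    refine Continuous.integrable_of_hasCompactSupport (by fun_prop) ?_
    refine huc.mono fun x hx => ?_
    contrapose! hx
    simp at hx
    simp [hx]
  have hI2 : ∀ i, Integrable (fun x => ‖u x‖ ^ 2 * fderiv ℝ (fun y => u y i) x
      (EuclideanSpace.single i 1)) := by
    intro i
    simp only [hfi]
    refine Continuous.integrable_of_hasCompactSupport (by fun_prop) ?_
    refine huc.mono fun x hx => ?_
    contrapose! hx
    simp at hx
    simp [hx]
  have hI3 : ∀ i, Integrable (fun x => ‖u x‖ ^ 2 * u x i) := by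
    intro i
    refine Continuous.integrable_of_hasCompactSupport (by fun_prop) ?_
    refine huc.mono fun x hx => ?_
    contrapose! hx
    simp at hx
    simp [hx]
  have key := fun i => integral_mul_fderiv_eq_neg_fderiv_mul_of_integrable (hI1 i) (hI2 i) (hI3 i)
    (fun x _ => hg.differentiable one_ne_zero x) (fun x _ => (hui i).differentiable one_ne_zero x)
  have hpt : ∀ x, ⟪fderiv ℝ u x (u x), u x⟫ + ⟪fderiv ℝ u x (u x), u x⟫ + dvg u x * ⟪u x, u x⟫
      = ∑ i, (fderiv ℝ (fun y => ‖u y‖ ^ 2) x (EuclideanSpace.single i 1) * u x i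
        + ‖u x‖ ^ 2 * fderiv ℝ (fun y => u y i) x (EuclideanSpace.single i 1)) := by
    intro x
    have hs : ∑ i, fderiv ℝ (fun y => ‖u y‖ ^ 2) x (EuclideanSpace.single i 1) * u x i
        = fderiv ℝ (fun y => ‖u y‖ ^ 2) x (u x) := by
      have e : u x = ∑ i, u x i • (EuclideanSpace.single i (1:ℝ) : E2) := by
        ext j
        fin_cases j <;> simp [Fin.sum_univ_two]
      conv_rhs => rw [e]
      rw [map_sum]
      refine Finset.sum_congr rfl fun i _ => ?_
      rw [map_smul, smul_eq_mul, mul_comm]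
    rw [Finset.sum_add_distrib, hs, aux_fderiv_sq hu, ← Finset.mul_sum]
    simp only [hfi]
    rw [real_inner_self_eq_norm_sq, real_inner_comm, dvg]
    ring
  unfold bEmac
  simp only [hpt]
  rw [integral_finsetSum]
  swap
  · exact fun i _ => (hI1 i).add (hI2 i)
  refine Finset.sum_eq_zero fun i _ => ?_
  rw [integral_add (hI1 i) (hI2 i), key i]
  ring

theorem bEmac_bound_diff_h1
    : ∃ C : ℝ, 0 < C ∧ ∀ u w : E2 → E2,
      ContDiff ℝ 1 u → ContDiff ℝ 1 w →
      HasCompactSupport u → HasCompactSupport w →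
      |bEmac u u w| ≤ C * h1Norm u ^ 2 * h1Norm (fun x => u x - w x) := by
  obtain ⟨K, hK, hL⟩ := aux_lady
  refine ⟨4 * K, by positivity, fun u w hu hw huc hwc => ?_⟩
  have hd : ContDiff ℝ 1 (fun x => u x - w x) := hu.sub hw
  have hdc : HasCompactSupport (fun x => u x - w x) := huc.sub hwc
  have hD : Continuous (fderiv ℝ u) := hu.continuous_fderiv one_ne_zero
  have hDc : HasCompactSupport (fderiv ℝ u) := huc.fderiv ℝ
  have hc := hu.continuous
  have hcw := hw.continuous
  have hcd := hd.continuous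
  set d : E2 → E2 := fun x => u x - w x with hdd
  have e1 : bEmac u u w = - bEmac u u d := by
    have : bEmac u u d = bEmac u u u - bEmac u u w := by
      unfold bEmac
      rw [← integral_sub (aux_int_s12 hu hc huc) (aux_int_s12 hu hcw huc)]
      congr 1
      ext x
      simp only [hdd, inner_sub_right, map_sub, inner_sub_left]
      ring
    rw [this, aux_zero_s12 hu huc]
    ring
  have hprodc : HasCompactSupport (fun x => ‖u x‖ * ‖d x‖) := huc.norm.mul_right
  have e2 : |bEmac u u d| ≤ 4 * ∫ x, ‖fderiv ℝ u x‖ * (‖u x‖ * ‖d x‖) := by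
    rw [← integral_const_mul]
    unfold bEmac
    rw [← Real.norm_eq_abs]
    refine norm_integral_le_of_norm_le ?_ (Filter.Eventually.of_forall fun x => ?_)
    · exact Continuous.integrable_of_hasCompactSupport (by fun_prop) (hprodc.mul_left.mul_left)
    · have a1 : |⟪fderiv ℝ u x (u x), d x⟫| ≤ ‖fderiv ℝ u x‖ * (‖u x‖ * ‖d x‖) := by
        refine (abs_real_inner_le_norm _ _).trans ?_
        rw [← mul_assoc]
        gcongr
        exact (fderiv ℝ u x).le_opNorm _
      have a2 : |⟪fderiv ℝ u x (d x), u x⟫| ≤ ‖fderiv ℝ u x‖ * (‖u x‖ * ‖d x‖) := by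
        refine (abs_real_inner_le_norm _ _).trans ?_
        rw [mul_comm ‖u x‖, ← mul_assoc]
        gcongr
        exact (fderiv ℝ u x).le_opNorm _
      have a3 : |dvg u x * ⟪u x, d x⟫| ≤ 2 * ‖fderiv ℝ u x‖ * (‖u x‖ * ‖d x‖) := by
        rw [abs_mul]
        exact mul_le_mul (aux_dvg_le u x) (abs_real_inner_le_norm _ _) (abs_nonneg _)
          (by positivity)
      rw [Real.norm_eq_abs]
      refine (abs_add_three _ _ _).trans ?_
      linarith
  have e3 := aux_cs hD.norm (g := fun x => ‖u x‖ * ‖d x‖) (by fun_prop) hDc.norm hprodc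
    (fun _ => norm_nonneg _) (fun _ => by positivity)
  have e4 := aux_cs (f := fun x => ‖u x‖ ^ 2) (g := fun x => ‖d x‖ ^ 2) (by fun_prop) (by fun_prop)
    (huc.comp_left (g := fun y : E2 => ‖y‖ ^ 2) (by simp))
    (hdc.comp_left (g := fun y : E2 => ‖y‖ ^ 2) (by simp))
    (fun _ => by positivity) (fun _ => by positivity)
  have hu0 : 0 ≤ h1Norm u := add_nonneg (aux_l2_nonneg _) (aux_l2_nonneg _)
  have hd0 : 0 ≤ h1Norm d := add_nonneg (aux_l2_nonneg _) (aux_l2_nonneg _)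
  have e5 : √(∫ x, (‖u x‖ * ‖d x‖) ^ 2) ≤ K * (h1Norm u * h1Norm d) := by
    refine Real.sqrt_le_iff.2 ⟨by positivity, ?_⟩
    simp only [mul_pow]
    refine (e4.trans (mul_le_mul (hL u hu huc) (hL d hd hdc) (Real.sqrt_nonneg _)
      (by positivity))).trans (le_of_eq (by ring))
  have e6 : l2Norm (fderiv ℝ u) ≤ h1Norm u := by
    rw [h1Norm]; linarith [aux_l2_nonneg u]
  rw [← aux_l2] at e3
  rw [e1, abs_neg]
  have e7 := e3.trans (mul_le_mul e6 e5 (Real.sqrt_nonneg _) hu0)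
  calc |bEmac u u d| ≤ 4 * (h1Norm u * (K * (h1Norm u * h1Norm d))) := by linarith
    _ = _ := by ring
end
end
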